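/- arXiv:2412.00295 — 4 statements merged into one kernel-verified Lean document; each statement's English description precedes it below -/
import Mathlib

section
/- The matrix X_ρ satisfies X_ρ² = λ·X_ρ, where λ = Σ_{k=0}^{τ-1} ρ^{2k}. -/
open Matrix Finset

/-- Integer power of a matrix `U`, where negative powers are interpreted as
powers of the conjugate transpose `Uᴴ`. -/
noncomputable def zpowU {n : ℕ} (U : Matrix (Fin n) (Fin n) ℂ) : ℤ → Matrix (Fin n) (Fin n) ℂ :=
  fun z => if 0 ≤ z then U ^ z.toNat else Uᴴ ^ (-z).toNat

/-- The τn×τn block matrix `X_ρ` whose (i,j)-th n×n block (0-based `i, j`) is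
`ρ^(i+j) · U^(j-i)`. -/
noncomputable def Xmat {n : ℕ} (τ : ℕ) (ρ : ℝ) (U : Matrix (Fin n) (Fin n) ℂ) :
    Matrix (Fin τ × Fin n) (Fin τ × Fin n) ℂ :=
  fun p q => (ρ : ℂ) ^ ((p.1 : ℕ) + (q.1 : ℕ)) * zpowU U ((q.1 : ℤ) - (p.1 : ℤ)) p.2 q.2

/-!
Since `ρ ^ (i + j) • U ^ (j - i) = (ρ • Uᴴ) ^ i * (ρ • U) ^ j`, the matrix `X_ρ` is a block column
`C` times a block row `R`, and `R * C = ∑ k, (ρ • U) ^ k * (ρ • Uᴴ) ^ k = λ • 1`.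
Hence `X_ρ ^ 2 = C * (R * C) * R = λ • X_ρ`.
-/

theorem vecMulVec_mul_self_of_dotProduct_eq_smul_one {ι S A : Type*} [Fintype ι] [Semiring A]
    [SMul S A] [IsScalarTower S A A] [SMulCommClass S A A] {u v : ι → A} {c : S}
    (h : v ⬝ᵥ u = c • 1) : vecMulVec u v * vecMulVec u v = c • vecMulVec u v := by
  rw [vecMulVec_mul_vecMulVec, h, smul_assoc, one_smul, vecMulVec_smul]

theorem dotProduct_smul_pow_of_mul_eq_one {S A : Type*} [CommSemiring S] [Semiring A] [Algebra S A]
    (τ : ℕ) (r : S) {a b : A} (h : a * b = 1) :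
    (fun k : Fin τ => (r • a) ^ (k : ℕ)) ⬝ᵥ (fun k : Fin τ => (r • b) ^ (k : ℕ)) =
      (∑ k ∈ range τ, r ^ (2 * k)) • (1 : A) := by
  simp only [dotProduct, smul_pow, smul_mul_smul_comm, pow_mul_pow_eq_one _ h, ← pow_add,
    ← two_mul, sum_range, sum_smul]

section BlockMatrix

variable {n : ℕ} {U : Matrix (Fin n) (Fin n) ℂ}

theorem zpowU_sub (hU : Uᴴ * U = 1) (i j : ℕ) : zpowU U (j - i) = Uᴴ ^ i * U ^ j := by
  rcases le_or_gt i j with hij | hij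
  · obtain ⟨m, rfl⟩ := Nat.exists_eq_add_of_le hij
    rw [pow_add U i m, ← mul_assoc, pow_mul_pow_eq_one i hU, one_mul]
    simp [zpowU]
  · obtain ⟨m, rfl⟩ := Nat.exists_eq_add_of_le' hij.le
    rw [pow_add Uᴴ m j, mul_assoc, pow_mul_pow_eq_one j hU, mul_one, zpowU, if_neg (by lia)]
    simp

theorem Xmat_eq_comp_vecMulVec (τ : ℕ) (ρ : ℝ) (hU : Uᴴ * U = 1) :
    Xmat τ ρ U = compAlgEquiv (Fin τ) (Fin n) ℂ ℝ
      (vecMulVec (fun i => (ρ • Uᴴ) ^ (i : ℕ)) (fun j => (ρ • U) ^ (j : ℕ))) := by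
  ext ⟨i, a⟩ ⟨j, b⟩
  simp only [Xmat, zpowU_sub hU, compAlgEquiv_apply, comp_apply, vecMulVec_apply, smul_pow,
    smul_mul_smul_comm, ← pow_add, Matrix.smul_apply, Complex.real_smul, Complex.ofReal_pow]

theorem stmt_0_general (τ : ℕ) (ρ : ℝ) (hU : U ∈ unitaryGroup (Fin n) ℂ) :
    Xmat τ ρ U * Xmat τ ρ U = (∑ k ∈ range τ, ρ ^ (2 * k)) • Xmat τ ρ U := by
  obtain ⟨hU₁ : Uᴴ * U = 1, hU₂ : U * Uᴴ = 1⟩ := hU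
  have row_dotProduct_col := dotProduct_smul_pow_of_mul_eq_one τ ρ hU₂
  rw [Xmat_eq_comp_vecMulVec τ ρ hU₁, ← map_mul,
    vecMulVec_mul_self_of_dotProduct_eq_smul_one row_dotProduct_col, map_smul]

end BlockMatrix

/-- `X_ρ² = λ • X_ρ` with `λ = ∑_{k=0}^{τ-1} ρ^(2k)`. -/
theorem stmt_0 {n τ : ℕ} (hn : 0 < n) (hτ : 0 < τ)
    (U : Matrix (Fin n) (Fin n) ℂ) (hU₁ : Uᴴ * U = 1) (hU₂ : U * Uᴴ = 1)
    (ρ : ℝ) (hρ : ρ ∈ Set.Ioc (0 : ℝ) 1) :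
    Xmat τ ρ U * Xmat τ ρ U =
      (((∑ k ∈ Finset.range τ, ρ ^ (2 * k) : ℝ)) : ℂ) • Xmat τ ρ U := by
  rw [Complex.coe_smul, stmt_0_general τ ρ ⟨hU₁, hU₂⟩]
end

section
/- Every eigenvalue of the matrix X_ρ is either 0 or λ; that is, if X_ρ ξ = κ ξ for some nonzero vector ξ ∈ ℂ^{τn}, then κ = 0 or κ = λ. -/
open Matrix Finset

/-!
Let `W = [I, ρU, …, ρ^(τ-1) U^(τ-1)]`. Unitarity of `U` gives `X_ρ = Wᴴ W`, while `W Wᴴ = λ I`.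
If `Wᴴ W ξ = κ ξ`, applying `W` gives `λ W ξ = κ W ξ`; hence `κ = λ`, or `W ξ = 0` and then
`κ ξ = 0`.
-/

section Eigenvalue

variable {m n R : Type*} [Fintype m] [DecidableEq m] [Fintype n] [CommRing R] [IsDomain R]

theorem eq_zero_or_eq_of_mul_mulVec_eq_smul {A : Matrix n m R} {B : Matrix m n R} {c κ : R}
    {v : n → R} (hBA : B * A = c • 1) (hv : v ≠ 0) (hκ : (A * B) *ᵥ v = κ • v) :
    κ = 0 ∨ κ = c := by
  have hBv : (κ - c) • B *ᵥ v = 0 := by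
    rw [sub_smul, sub_eq_zero]
    calc κ • B *ᵥ v = B *ᵥ (A * B) *ᵥ v := by rw [hκ, mulVec_smul]
      _ = (B * A) *ᵥ B *ᵥ v := by simp only [mulVec_mulVec, Matrix.mul_assoc]
      _ = c • B *ᵥ v := by rw [hBA, smul_mulVec, one_mulVec]
  obtain hc | hB := smul_eq_zero.mp hBv
  · exact Or.inr (sub_eq_zero.mp hc)
  · have hκv : κ • v = 0 := by rw [← hκ, ← mulVec_mulVec, hB, mulVec_zero]
    exact Or.inl ((smul_eq_zero.mp hκv).resolve_right hv)

end Eigenvalue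

section BlockRow

variable {ι m n R : Type*}

/-- The block matrix with a single row of blocks `A i`, whose columns are indexed by pairs
(block, column within the block) as in `Xmat`; it is used to factor block Gram matrices. -/
def blockRow (A : ι → Matrix m n R) : Matrix m (ι × n) R :=
  of fun a p => A p.1 a p.2

theorem conjTranspose_blockRow_mul_blockRow_apply [Fintype m] [NonUnitalNonAssocSemiring R] [Star R]
    (A B : ι → Matrix m n R) (p q : ι × n) :
    ((blockRow A)ᴴ * blockRow B) p q = ((A p.1)ᴴ * B q.1) p.2 q.2 :=
  rfl

theorem blockRow_mul_conjTranspose [Fintype ι] [Fintype n] [NonUnitalNonAssocSemiring R] [Star R]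
    (A : ι → Matrix m n R) :
    blockRow A * (blockRow A)ᴴ = ∑ i, A i * (A i)ᴴ := by
  ext a b
  simp [blockRow, mul_apply, Matrix.sum_apply, Fintype.sum_prod_type]

theorem blockRow_smul_unitary_mul_conjTranspose [Fintype ι] [Fintype m] [DecidableEq m]
    [CommRing R] [StarRing R] (c : ι → R) (V : ι → unitaryGroup m R) :
    blockRow (fun i => c i • (V i : Matrix m m R)) *
      (blockRow fun i => c i • (V i : Matrix m m R))ᴴ = (∑ i, c i * star (c i)) • 1 := by
  have hV (i : ι) : (V i : Matrix m m R) * (V i : Matrix m m R)ᴴ = 1 :=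
    Unitary.coe_mul_star_self (V i)
  simp only [blockRow_mul_conjTranspose, conjTranspose_smul, smul_mul_smul_comm, hV, sum_smul]

end BlockRow

section UnitaryPowers

variable {n : ℕ} (U : unitaryGroup (Fin n) ℂ)

theorem zpowU_coe_unitary (z : ℤ) : zpowU (U : Matrix (Fin n) (Fin n) ℂ) z = ↑(U ^ z) := by
  obtain ⟨k, rfl | rfl⟩ := z.eq_nat_or_neg
  · simp [zpowU]
  · obtain rfl | hk := k.eq_zero_or_pos
    · simp [zpowU]
    · simp [zpowU, hk.ne', star_eq_conjTranspose]

theorem zpowU_natCast_sub_natCast (i j : ℕ) :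
    zpowU (U : Matrix (Fin n) (Fin n) ℂ) (j - i) =
      (U ^ i : Matrix (Fin n) (Fin n) ℂ)ᴴ * (U ^ j : Matrix (Fin n) (Fin n) ℂ) := by
  rw [zpowU_coe_unitary, sub_eq_neg_add, _root_.zpow_add, _root_.zpow_neg, zpow_natCast,
    zpow_natCast]
  rfl

/-- The block row `W = [I, ρU, …, ρ^(τ-1) U^(τ-1)]`, which factors `X_ρ` as `Wᴴ * W`. -/
def scaledPowerRow (τ : ℕ) (ρ : ℝ) : Matrix (Fin n) (Fin τ × Fin n) ℂ :=
  blockRow fun k : Fin τ => (ρ : ℂ) ^ (k : ℕ) • (U ^ (k : ℕ) : Matrix (Fin n) (Fin n) ℂ)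

theorem conjTranspose_scaledPowerRow_mul_scaledPowerRow (τ : ℕ) (ρ : ℝ) :
    (scaledPowerRow U τ ρ)ᴴ * scaledPowerRow U τ ρ = Xmat τ ρ (U : Matrix (Fin n) (Fin n) ℂ) := by
  ext p q
  rw [scaledPowerRow, conjTranspose_blockRow_mul_blockRow_apply, Xmat, zpowU_natCast_sub_natCast,
    conjTranspose_smul, smul_mul_smul_comm, Matrix.smul_apply, smul_eq_mul, star_pow, pow_add]
  simp only [RCLike.star_def, Complex.conj_ofReal]

theorem scaledPowerRow_mul_conjTranspose (τ : ℕ) (ρ : ℝ) :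
    scaledPowerRow U τ ρ * (scaledPowerRow U τ ρ)ᴴ =
      ((∑ k ∈ range τ, ρ ^ (2 * k) : ℝ) : ℂ) • 1 := by
  have hsum : ((∑ k ∈ range τ, ρ ^ (2 * k) : ℝ) : ℂ) =
      ∑ k : Fin τ, (ρ : ℂ) ^ (k : ℕ) * star ((ρ : ℂ) ^ (k : ℕ)) := by
    simp [← Fin.sum_univ_eq_sum_range, two_mul, pow_add]
  rw [hsum]
  exact blockRow_smul_unitary_mul_conjTranspose _ fun k : Fin τ => U ^ (k : ℕ)

end UnitaryPowers

theorem stmt_1_general {n τ : ℕ} (U : unitaryGroup (Fin n) ℂ) (ρ : ℝ)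
    (ξ : Fin τ × Fin n → ℂ) (hξ : ξ ≠ 0) (κ : ℂ)
    (h : (Xmat τ ρ (U : Matrix (Fin n) (Fin n) ℂ)).mulVec ξ = κ • ξ) :
    κ = 0 ∨ κ = (((∑ k ∈ Finset.range τ, ρ ^ (2 * k) : ℝ)) : ℂ) := by
  rw [← conjTranspose_scaledPowerRow_mul_scaledPowerRow] at h
  exact eq_zero_or_eq_of_mul_mulVec_eq_smul (scaledPowerRow_mul_conjTranspose U τ ρ) hξ h

/-- every eigenvalue of `X_ρ` is `0` or `λ = ∑_{k<τ} ρ^(2k)`. -/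
theorem stmt_1 {n τ : ℕ} (hn : 0 < n) (hτ : 0 < τ)
    (U : Matrix (Fin n) (Fin n) ℂ) (hU₁ : Uᴴ * U = 1) (hU₂ : U * Uᴴ = 1)
    (ρ : ℝ) (hρ : ρ ∈ Set.Ioc (0 : ℝ) 1)
    (ξ : Fin τ × Fin n → ℂ) (hξ : ξ ≠ 0) (κ : ℂ)
    (h : (Xmat τ ρ U).mulVec ξ = κ • ξ) :
    κ = 0 ∨ κ = (((∑ k ∈ Finset.range τ, ρ ^ (2 * k) : ℝ)) : ℂ) :=
  stmt_1_general ⟨U, hU₁, hU₂⟩ ρ ξ hξ κ h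
end

section
/- If τ = k·n for a positive integer k, then for each j = 1, …, n the τ-dimensional vector ζ_j = (ω_j^{-(i-1)})_{i=1}^{τ}, with ω_j = e^{2πij/n}, is an eigenvector of the τ×τ metric tensor Q: there exists μ_j ≥ 0 with Q ζ_j = μ_j ζ_j. -/
open Matrix Finset

/-- The n×n cyclic shift permutation matrix: `C e_k = e_{k+1 mod n}`,
i.e. `C_{ij} = 1` iff `i ≡ j + 1 (mod n)`. -/
def cycC (n : ℕ) : Matrix (Fin n) (Fin n) ℂ :=
  fun i j => if (i : ℕ) = ((j : ℕ) + 1) % n then 1 else 0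

/-- The n-th root of unity `ω_j = e^{2πij/n}`. -/
noncomputable def omega (n : ℕ) (j : ℕ) : ℂ :=
  Complex.exp (2 * Real.pi * Complex.I * j / n)

/-- The τ×τ metric tensor `Q` of the reservoir kernel with cyclic-shift coupling
(0-based indices): `Q_{ij} = w* (C*)^i C^j w`. -/
noncomputable def QmetTau (n τ : ℕ) (w : Fin n → ℂ) : Matrix (Fin τ) (Fin τ) ℂ :=
  fun i j => star w ⬝ᵥ (((cycC n)ᴴ ^ (i : ℕ) * cycC n ^ (j : ℕ)).mulVec w)

/-!
`Q` is the Gram matrix of the orbit `w, C w, C² w, …` of the isometry `C`. For `z = ω_j` the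
twisted isometry `D = z⁻¹ C` satisfies `D ^ τ = 1`, so it fixes the average `p` of
`w, D w, …, D ^ (τ - 1) w`. Hence every `Dⁱ w` has the same inner product with `p`, and averaging
over `i` shows that this common value is `‖p‖²`. Since `∑ l, z⁻ˡ Cˡ w = τ p`, this gives
`Q ζ = τ ‖p‖² ζ`.
-/

open Function WithLp

section PeriodicOrbit

theorem isFixedPt_birkhoffAverage_id {R M : Type*} [DivisionRing R] [AddCommGroup M] [Module R M]
    (f : M →ₗ[R] M) {τ : ℕ} {w : M} (hw : IsPeriodicPt f τ w) :
    IsFixedPt f (birkhoffAverage R f id τ w) := by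
  have map_average : f (birkhoffAverage R f id τ w) = birkhoffAverage R f id τ (f w) := by
    rw [map_birkhoffAverage R R f]
    simp only [birkhoffAverage, birkhoffSum, Function.comp_apply, id_eq, ← iterate_succ_apply,
      ← iterate_succ_apply' f]
  have average_apply_sub := birkhoffAverage_apply_sub_birkhoffAverage (R := R) f id τ w
  rw [hw.eq, sub_self, smul_zero, sub_eq_zero] at average_apply_sub
  exact map_average.trans average_apply_sub

variable {𝕜 E : Type*} [RCLike 𝕜] [SeminormedAddCommGroup E] [InnerProductSpace 𝕜 E]

theorem inner_iterate_left_of_isFixedPt (D : E →ₗᵢ[𝕜] E) {p : E} (hp : IsFixedPt D p) (l : ℕ)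
    (x : E) : inner 𝕜 (D^[l] x) p = inner 𝕜 x p := by
  rw [← (D ^ l).inner_map_map x p, LinearIsometry.coe_pow, (hp.iterate l).eq]

theorem inner_birkhoffAverage_id_eq_norm_sq (D : E →ₗᵢ[𝕜] E) {τ : ℕ} {w : E}
    (hw : IsPeriodicPt D τ w) :
    inner 𝕜 w (birkhoffAverage 𝕜 D id τ w) = (‖birkhoffAverage 𝕜 D id τ w‖ ^ 2 : 𝕜) := by
  set p := birkhoffAverage 𝕜 D id τ w with hp
  have hfix : IsFixedPt D p := isFixedPt_birkhoffAverage_id D.toLinearMap hw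
  rcases eq_or_ne τ 0 with rfl | hτ
  · simp [hp]
  have inner_comp : innerSL 𝕜 p ∘ D = innerSL 𝕜 p := by
    ext x
    simpa only [hfix.eq, Function.comp_apply, innerSL_apply_apply] using D.inner_map_map p x
  have inner_average : inner 𝕜 p p = inner 𝕜 p w :=
    calc inner 𝕜 p p = birkhoffAverage 𝕜 D (innerSL 𝕜 p) τ w :=
          map_birkhoffAverage 𝕜 𝕜 (innerSL 𝕜 p) D id τ w
      _ = inner 𝕜 p w :=
          congrFun (birkhoffAverage_of_comp_eq 𝕜 inner_comp (Nat.cast_ne_zero.mpr hτ)) w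
  rw [← inner_conj_symm, ← inner_average, inner_conj_symm, inner_self_eq_norm_sq_to_K]

/-- The isometry `z⁻¹ U` for a scalar `z` of norm one. It is used to turn the `z`-eigenspace of `U`
into a space of fixed points. -/
def twist (U : E →ₗᵢ[𝕜] E) (z : 𝕜) (hz : ‖z‖ = 1) : E →ₗᵢ[𝕜] E where
  toLinearMap := z⁻¹ • U.toLinearMap
  norm_map' x := by simp [norm_smul, hz]

theorem iterate_twist (U : E →ₗᵢ[𝕜] E) {z : 𝕜} (hz : ‖z‖ = 1) (l : ℕ) (x : E) :
    (twist U z hz)^[l] x = z⁻¹ ^ l • U^[l] x := by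
  have coe_twist : ⇑(twist U z hz) = ⇑(z⁻¹ • U.toLinearMap) := rfl
  rw [coe_twist, ← Module.End.pow_apply, smul_pow, LinearMap.smul_apply, Module.End.pow_apply]
  rfl

theorem isPeriodicPt_twist (U : E →ₗᵢ[𝕜] E) {z : 𝕜} (hz : ‖z‖ = 1) {τ : ℕ} {w : E}
    (hw : U^[τ] w = z ^ τ • w) : IsPeriodicPt (twist U z hz) τ w := by
  have hz0 : z ≠ 0 := norm_ne_zero_iff.mp (hz ▸ one_ne_zero)
  rw [IsPeriodicPt, IsFixedPt, iterate_twist, hw, smul_smul, ← mul_pow, inv_mul_cancel₀ hz0,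
    one_pow, one_smul]

theorem sum_zpow_neg_smul_iterate (U : E →ₗᵢ[𝕜] E) {z : 𝕜} (hz : ‖z‖ = 1) (τ : ℕ) (w : E) :
    ∑ l : Fin τ, z ^ (-(l : ℤ)) • U^[l] w =
      (τ : 𝕜) • birkhoffAverage 𝕜 (twist U z hz) id τ w := by
  rcases eq_or_ne τ 0 with rfl | hτ
  · simp
  · rw [birkhoffAverage, smul_inv_smul₀ (Nat.cast_ne_zero.mpr hτ), birkhoffSum, Finset.sum_range]
    simp only [id_eq, iterate_twist, _root_.zpow_neg, zpow_natCast, inv_pow]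

theorem inner_iterate_birkhoffAverage_twist (U : E →ₗᵢ[𝕜] E) {z : 𝕜} (hz : ‖z‖ = 1) {τ : ℕ} {w : E}
    (hw : U^[τ] w = z ^ τ • w) (i : ℕ) :
    inner 𝕜 (U^[i] w) (birkhoffAverage 𝕜 (twist U z hz) id τ w) =
      z ^ (-(i : ℤ)) * (‖birkhoffAverage 𝕜 (twist U z hz) id τ w‖ ^ 2 : 𝕜) := by
  set D := twist U z hz with hD
  set p := birkhoffAverage 𝕜 D id τ w
  have hz0 : z ≠ 0 := norm_ne_zero_iff.mp (hz ▸ one_ne_zero)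
  have hperiodic : IsPeriodicPt D τ w := isPeriodicPt_twist U hz hw
  have hfix : IsFixedPt D p := isFixedPt_birkhoffAverage_id D.toLinearMap hperiodic
  have iterate_eq : U^[i] w = z ^ i • D^[i] w := by
    rw [hD, iterate_twist, inv_pow, smul_inv_smul₀ (pow_ne_zero i hz0)]
  rw [iterate_eq, inner_smul_left, inner_iterate_left_of_isFixedPt D hfix,
    inner_birkhoffAverage_id_eq_norm_sq D hperiodic, map_pow, ← RCLike.inv_eq_conj hz,
    _root_.zpow_neg, zpow_natCast, inv_pow]

theorem gram_iterate_mulVec_zpow_neg (U : E →ₗᵢ[𝕜] E) {z : 𝕜} (hz : ‖z‖ = 1) {τ : ℕ} {w : E}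
    (hw : U^[τ] w = z ^ τ • w) :
    gram 𝕜 (fun i : Fin τ => U^[i] w) *ᵥ (fun i : Fin τ => z ^ (-(i : ℤ))) =
      ((τ * ‖birkhoffAverage 𝕜 (twist U z hz) id τ w‖ ^ 2 : ℝ) : 𝕜) •
        fun i : Fin τ => z ^ (-(i : ℤ)) := by
  ext i
  set p := birkhoffAverage 𝕜 (twist U z hz) id τ w
  calc ∑ l : Fin τ, inner 𝕜 (U^[i] w) (U^[l] w) * z ^ (-(l : ℤ))
      = inner 𝕜 (U^[i] w) (∑ l : Fin τ, z ^ (-(l : ℤ)) • U^[l] w) := by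
        simp only [inner_sum, inner_smul_right, mul_comm]
    _ = τ * (z ^ (-(i : ℤ)) * (‖p‖ ^ 2 : 𝕜)) := by
        rw [sum_zpow_neg_smul_iterate U hz, inner_smul_right,
          inner_iterate_birkhoffAverage_twist U hz hw]
    _ = ((τ * ‖p‖ ^ 2 : ℝ) : 𝕜) * z ^ (-(i : ℤ)) := by
        push_cast
        ring

end PeriodicOrbit

section OrbitMatrix

variable {𝕜 ι : Type*} [RCLike 𝕜] [Fintype ι] [DecidableEq ι]

theorem star_dotProduct_conjTranspose_pow_mul_pow_mulVec_eq_inner (A : Matrix ι ι 𝕜) (w : ι → 𝕜)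
    (i j : ℕ) : star w ⬝ᵥ ((Aᴴ ^ i * A ^ j) *ᵥ w) =
      inner 𝕜 (toLp 2 (A ^ i *ᵥ w)) (toLp 2 (A ^ j *ᵥ w)) := by
  rw [EuclideanSpace.inner_toLp_toLp, dotProduct_comm (A ^ j *ᵥ w), star_mulVec,
    ← dotProduct_mulVec, mulVec_mulVec, conjTranspose_pow]

theorem toLp_permMatrixHom_pow_mulVec (σ : Equiv.Perm ι) (w : ι → 𝕜) (m : ℕ) :
    toLp 2 (permMatrixHom σ ^ m *ᵥ w) =
      (LinearIsometryEquiv.piLpCongrLeft 2 𝕜 𝕜 σ)^[m] (toLp 2 w) := by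
  induction m with
  | zero => simp
  | succ m ih =>
    rw [pow_succ', ← mulVec_mulVec, iterate_succ_apply', ← ih, permMatrixHom_apply,
      permMatrix_mulVec]
    rfl

end OrbitMatrix

section CyclicShift

theorem finRotate_pow_self (n : ℕ) : finRotate n ^ n = 1 := by
  ext i
  have := i.neZero
  have coe_finRotate_eq : ⇑(finRotate n) = (· + 1) := funext finRotate_apply
  have nsmul_one_eq_zero : n • (1 : Fin n) = 0 := by
    simpa only [Fintype.card_fin] using card_nsmul_eq_zero (x := (1 : Fin n))
  rw [← Equiv.Perm.iterate_eq_pow, coe_finRotate_eq, add_right_iterate_apply, nsmul_one_eq_zero,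
    add_zero, Equiv.Perm.one_apply]

theorem cycC_eq_permMatrixHom (n : ℕ) : cycC n = permMatrixHom (finRotate n) := by
  ext i j
  have := i.neZero
  have val_eq_iff : (i : ℕ) = (j + 1) % n ↔ i - 1 = j := by
    rw [sub_eq_iff_eq_add, Fin.ext_iff, Fin.val_add, Fin.coe_ofNat_eq_mod, Nat.add_mod_mod]
  simp [cycC, PEquiv.toMatrix_apply, Equiv.Perm.inv_def, val_eq_iff]

theorem cycC_pow_self (n : ℕ) : cycC n ^ n = 1 := by
  rw [cycC_eq_permMatrixHom, ← map_pow, finRotate_pow_self, map_one]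

theorem QmetTau_eq_gram (n τ : ℕ) (w : Fin n → ℂ) :
    QmetTau n τ w = gram ℂ (fun i : Fin τ =>
      (LinearIsometryEquiv.piLpCongrLeft 2 ℂ ℂ (finRotate n))^[i] (toLp 2 w)) := by
  ext i j
  rw [QmetTau, star_dotProduct_conjTranspose_pow_mul_pow_mulVec_eq_inner, gram_apply,
    cycC_eq_permMatrixHom, toLp_permMatrixHom_pow_mulVec, toLp_permMatrixHom_pow_mulVec]

theorem omega_pow_self (n j : ℕ) : omega n j ^ n = 1 := by
  rcases eq_or_ne n 0 with rfl | hn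
  · exact pow_zero _
  have omega_eq_pow : omega n j = Complex.exp (2 * Real.pi * Complex.I / n) ^ j := by
    rw [omega, ← Complex.exp_nat_mul]
    ring_nf
  rw [omega_eq_pow, pow_right_comm, (Complex.isPrimitiveRoot_exp n hn).pow_eq_one, one_pow]

end CyclicShift

/-- when `τ = k·n`, each vector `ζ_j = (ω_j^{-(i-1)})_{i=1}^τ` is an
eigenvector of `Q` with some nonnegative eigenvalue `μ_j`. -/
theorem stmt_10 (n k : ℕ) (hn : 0 < n) (hk : 0 < k) (w : Fin n → ℂ) :
    ∀ j : Fin n, ∃ μ : ℝ, 0 ≤ μ ∧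
      (QmetTau n (k * n) w).mulVec
          (fun i : Fin (k * n) => omega n ((j : ℕ) + 1) ^ (-(i : ℤ))) =
        (μ : ℂ) • (fun i : Fin (k * n) => omega n ((j : ℕ) + 1) ^ (-(i : ℤ))) := by
  intro j
  set z := omega n (j + 1)
  let U := (LinearIsometryEquiv.piLpCongrLeft 2 ℂ ℂ (finRotate n)).toLinearIsometry
  have z_pow : z ^ n = 1 := omega_pow_self n (j + 1)
  have norm_z : ‖z‖ = 1 := Complex.norm_eq_one_of_pow_eq_one z_pow hn.ne'
  have orbit_periodic : U^[k * n] (toLp 2 w) = z ^ (k * n) • toLp 2 w :=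
    calc U^[k * n] (toLp 2 w) = toLp 2 (cycC n ^ (k * n) *ᵥ w) := by
          rw [cycC_eq_permMatrixHom, toLp_permMatrixHom_pow_mulVec]
          rfl
      _ = z ^ (k * n) • toLp 2 w := by
          rw [pow_mul', cycC_pow_self, pow_mul', z_pow, one_pow, one_pow, one_mulVec, one_smul]
  refine ⟨(k * n : ℕ) * ‖birkhoffAverage ℂ (twist U z norm_z) id (k * n) (toLp 2 w)‖ ^ 2,
    by positivity, ?_⟩
  rw [QmetTau_eq_gram]
  exact gram_iterate_mulVec_zpow_neg U norm_z orbit_periodic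
end

section
/- Every real symmetric centrosymmetric n×n matrix A admits an orthonormal basis of ℝ^n consisting of eigenvectors of A, of which exactly ⌈n/2⌉ are symmetric (Jv = v) and exactly ⌊n/2⌋ are skew-symmetric (Jv = −v). -/
open Matrix Finset

/-- The n×n exchange matrix `J`: ones on the antidiagonal, zeros elsewhere. -/
def exchMat (n : ℕ) : Matrix (Fin n) (Fin n) ℝ :=
  fun i j => if j = i.rev then 1 else 0

/-!
Since `J * J = 1`, centrosymmetry says that `A` commutes with `J`. Both are symmetric, so they have
a common orthonormal eigenbasis, on which the involution `J` acts by signs. The sum of these signs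
is the trace of `J`, which is the number `n % 2` of fixed points of `i ↦ n + 1 - i`.
-/

open Module

section Involution

variable {R M : Type*} [CommRing R] [AddCommGroup M] [Module R M] {T : End R M}

theorem apply_eq_self_or_neg_of_mul_self_eq_one [IsDomain R] [IsTorsionFree R M] (hT : T * T = 1)
    {c : R} {x : M} (hx : T x = c • x) : T x = x ∨ T x = -x := by
  rcases eq_or_ne x 0 with rfl | hx0
  · simp
  have hsq : (c * c) • x = (1 : R) • x := by
    rw [mul_smul, ← hx, ← map_smul, ← hx, ← Module.End.mul_apply, hT, Module.End.one_apply,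
      one_smul]
  rcases mul_self_eq_one_iff.mp (smul_left_injective R hx0 hsq) with rfl | rfl
  · exact .inl (by rw [hx, one_smul])
  · exact .inr (by rw [hx, neg_one_smul])

theorem trace_eq_two_mul_card_sub_card {ι : Type*} [Fintype ι] (b : Basis ι R M) {s : Finset ι}
    (hs : ∀ i ∈ s, T (b i) = b i) (hs' : ∀ i ∉ s, T (b i) = -b i) :
    LinearMap.trace R M T = 2 * (#s : R) - Fintype.card ι := by
  classical
  have hdiag (i : ι) : LinearMap.toMatrix b b T i i = 2 * (if i ∈ s then 1 else 0) - 1 := by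
    rw [LinearMap.toMatrix_apply]
    split_ifs with hi
    · rw [hs i hi, b.repr_self, Finsupp.single_eq_same]
      ring
    · rw [hs' i hi, map_neg, Finsupp.neg_apply, b.repr_self, Finsupp.single_eq_same]
      ring
  simp only [LinearMap.trace_eq_matrix_trace R b, Matrix.trace, diag_apply, hdiag, sum_sub_distrib,
    ← mul_sum, sum_boole, filter_univ_mem, sum_const, card_univ, nsmul_one]

end Involution

section JointEigenbasis

variable {𝕜 E : Type*} [RCLike 𝕜] [NormedAddCommGroup E] [InnerProductSpace 𝕜 E]
  [FiniteDimensional 𝕜 E] {n : ℕ} {S T : End 𝕜 E}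

theorem exists_orthonormalBasis_forall_mem {ι : Type*} [DecidableEq ι] {V : ι → Submodule 𝕜 E}
    (hn : finrank 𝕜 E = n) (hV : DirectSum.IsInternal V)
    (hV' : OrthogonalFamily 𝕜 (fun i => V i) fun i => (V i).subtypeₗᵢ) :
    ∃ b : OrthonormalBasis (Fin n) 𝕜 E, ∀ i, ∃ j, b i ∈ V j := by
  have : Fintype {j // V j ≠ ⊥} :=
    (WellFoundedGT.finite_ne_bot_of_iSupIndep hV.submodule_iSupIndep).fintype
  have hne : DirectSum.IsInternal fun j : {j // V j ≠ ⊥} => V j :=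
    DirectSum.isInternal_ne_bot_iff.mpr hV
  have hne' := hV'.comp (Subtype.val_injective (p := fun j => V j ≠ ⊥))
  exact ⟨hne.subordinateOrthonormalBasis hn hne',
    fun i => ⟨_, hne.subordinateOrthonormalBasis_subordinate hn i hne'⟩⟩

theorem exists_orthonormalBasis_joint_eigenvectors (hn : finrank 𝕜 E = n) (hS : S.IsSymmetric)
    (hT : T.IsSymmetric) (hST : Commute S T) :
    ∃ (b : OrthonormalBasis (Fin n) 𝕜 E) (μ ν : Fin n → 𝕜),
      (∀ i, S (b i) = μ i • b i) ∧ ∀ i, T (b i) = ν i • b i := by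
  classical
  obtain ⟨b, hb⟩ := exists_orthonormalBasis_forall_mem hn
    (hS.directSum_isInternal_of_commute hT hST) (hS.orthogonalFamily_eigenspace_inf_eigenspace hT)
  choose χ hχ using hb
  exact ⟨b, fun i => (χ i).2, fun i => (χ i).1,
    fun i => Module.End.mem_eigenspace_iff.mp (hχ i).1,
    fun i => Module.End.mem_eigenspace_iff.mp (hχ i).2⟩

theorem exists_orthonormalBasis_eigenvectors_of_commute_involution (hn : finrank 𝕜 E = n)
    (hS : S.IsSymmetric) (hT : T.IsSymmetric) (hTT : T * T = 1) (hST : Commute S T) :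
    ∃ (b : OrthonormalBasis (Fin n) 𝕜 E) (μ : Fin n → 𝕜) (s : Finset (Fin n)),
      (∀ i, S (b i) = μ i • b i) ∧ (∀ i ∈ s, T (b i) = b i) ∧ ∀ i ∉ s, T (b i) = -b i := by
  classical
  obtain ⟨b, μ, ν, hμ, hν⟩ := exists_orthonormalBasis_joint_eigenvectors hn hS hT hST
  refine ⟨b, μ, ({i | T (b i) = b i} : Finset (Fin n)), hμ,
    fun i hi => (mem_filter_univ i).mp hi, fun i hi => ?_⟩
  exact (apply_eq_self_or_neg_of_mul_self_eq_one hTT (hν i)).resolve_left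
    fun h => hi ((mem_filter_univ i).mpr h)

end JointEigenbasis

section ExchangeMatrix

variable (n : ℕ)

theorem exchMat_eq_permMatrix : exchMat n = (Fin.revPerm : Equiv.Perm (Fin n)).permMatrix ℝ := by
  ext i j
  simp [exchMat, PEquiv.toMatrix_apply, eq_comm]

theorem isHermitian_exchMat : (exchMat n).IsHermitian := by
  rw [exchMat_eq_permMatrix, IsHermitian, conjTranspose_permMatrix]
  rfl

theorem exchMat_mul_self : exchMat n * exchMat n = 1 := by
  have hrev : (Fin.revPerm : Equiv.Perm (Fin n)) * Fin.revPerm = 1 := Equiv.ext Fin.rev_rev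
  rw [exchMat_eq_permMatrix, ← permMatrix_mul, hrev, permMatrix_one]

theorem ncard_fixedPoints_revPerm :
    (Function.fixedPoints (Fin.revPerm : Equiv.Perm (Fin n))).ncard = n % 2 := by
  have hfix (i : Fin n) : i ∈ Function.fixedPoints (Fin.revPerm : Equiv.Perm (Fin n)) ↔
      2 * (i : ℕ) + 1 = n := by
    rw [Function.mem_fixedPoints_iff, Fin.revPerm_apply, Fin.ext_iff, Fin.val_rev]
    lia
  rcases n.even_or_odd' with ⟨k, rfl | rfl⟩
  · rw [Nat.mul_mod_right, Set.ncard_eq_zero, Set.eq_empty_iff_forall_notMem]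
    intro i
    rw [hfix]
    lia
  · rw [Nat.mul_add_mod, Nat.mod_eq_of_lt one_lt_two, Set.ncard_eq_one]
    refine ⟨⟨k, by lia⟩, Set.ext fun i => ?_⟩
    rw [hfix, Set.mem_singleton_iff, Fin.ext_iff]
    lia

theorem trace_exchMat : (exchMat n).trace = (n % 2 : ℕ) := by
  rw [exchMat_eq_permMatrix, trace_permutation, ncard_fixedPoints_revPerm]

variable {n}

theorem commute_exchMat_of_centrosymmetric {A : Matrix (Fin n) (Fin n) ℝ}
    (hA : exchMat n * A * exchMat n = A) : Commute A (exchMat n) :=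
  calc A * exchMat n = exchMat n * A * exchMat n * exchMat n := by rw [hA]
    _ = exchMat n * A := by rw [Matrix.mul_assoc, exchMat_mul_self, Matrix.mul_one]

theorem card_eq_of_orthonormalBasis_exchMat
    (b : OrthonormalBasis (Fin n) ℝ (EuclideanSpace ℝ (Fin n))) {s : Finset (Fin n)}
    (hs : ∀ i ∈ s, toEuclideanLin (exchMat n) (b i) = b i)
    (hs' : ∀ i ∉ s, toEuclideanLin (exchMat n) (b i) = -b i) : #s = (n + 1) / 2 := by
  have htrace : (exchMat n).trace = 2 * (#s : ℝ) - n := by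
    rw [← trace_toLin_eq (exchMat n) (EuclideanSpace.basisFun (Fin n) ℝ).toBasis,
      ← toEuclideanLin_eq_toLin_orthonormal, trace_eq_two_mul_card_sub_card b.toBasis (s := s),
      Fintype.card_fin]
    · simpa using hs
    · simpa using hs'
  have hcard : n % 2 + n = 2 * #s := by
    rw [trace_exchMat, eq_sub_iff_add_eq] at htrace
    exact_mod_cast htrace
  lia

end ExchangeMatrix

theorem dotProduct_ofLp_eq_ite {ι n : Type*} [DecidableEq ι] [Fintype n]
    {v : ι → EuclideanSpace ℝ n} (hv : Orthonormal ℝ v) (i j : ι) :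
    (v i).ofLp ⬝ᵥ (v j).ofLp = if i = j then 1 else 0 := by
  rw [← orthonormal_iff_ite.mp hv i j, EuclideanSpace.inner_eq_star_dotProduct, star_trivial,
    dotProduct_comm]

/-- every real symmetric centrosymmetric n×n matrix admits an
orthonormal basis of eigenvectors of which exactly `⌈n/2⌉` are symmetric
(`Jv = v`) and exactly `⌊n/2⌋` are skew-symmetric (`Jv = -v`). -/
theorem stmt_16 (n : ℕ) (hn : 0 < n) (A : Matrix (Fin n) (Fin n) ℝ)
    (hsym : Aᵀ = A) (hcentro : exchMat n * A * exchMat n = A) :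
    ∃ (v : Fin n → Fin n → ℝ) (μ : Fin n → ℝ) (S : Finset (Fin n)),
      (∀ i j : Fin n, v i ⬝ᵥ v j = if i = j then 1 else 0) ∧
      (∀ i : Fin n, A.mulVec (v i) = μ i • v i) ∧
      S.card = (n + 1) / 2 ∧
      (∀ i ∈ S, (exchMat n).mulVec (v i) = v i) ∧
      (∀ i ∉ S, (exchMat n).mulVec (v i) = -(v i)) := by
  have hA : (toEuclideanLin A).IsSymmetric :=
    isSymmetric_toEuclideanLin_iff.mpr ((conjTranspose_eq_transpose_of_trivial A).trans hsym)
  have hJ : (toEuclideanLin (exchMat n)).IsSymmetric :=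
    isSymmetric_toEuclideanLin_iff.mpr (isHermitian_exchMat n)
  have hJJ : toEuclideanLin (exchMat n) * toEuclideanLin (exchMat n) = 1 := by
    rw [Module.End.mul_eq_comp, ← toLpLin_mul_same, exchMat_mul_self, toLpLin_one,
      Module.End.one_eq_id]
  have hAJ : Commute (toEuclideanLin A) (toEuclideanLin (exchMat n)) :=
    (commute_exchMat_of_centrosymmetric hcentro).map (toLpLinAlgEquiv 2)
  obtain ⟨b, μ, S, hμ, hS, hS'⟩ := exists_orthonormalBasis_eigenvectors_of_commute_involution
    finrank_euclideanSpace_fin hA hJ hJJ hAJ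
  exact ⟨fun i => (b i).ofLp, μ, S, dotProduct_ofLp_eq_ite b.orthonormal,
    fun i => congrArg WithLp.ofLp (hμ i), card_eq_of_orthonormalBasis_exchMat b hS hS',
    fun i hi => congrArg WithLp.ofLp (hS i hi), fun i hi => congrArg WithLp.ofLp (hS' i hi)⟩
end
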